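/- Fix ℓ ≥ 3. Let (G,c) be an n-vertex edge-colored graph with no rainbow ℓ-cycle and let A ⊆ V(G). Then there exists a vertex a ∈ A whose number of distinct colors on edges into A (i.e., deg^c of a in the induced edge-colored subgraph G[A]) is at most |A|/2 + 3ℓ. -/

import Mathlib

open Finset

variable {V : Type*}

/-- Number of distinct colors on edges incident to `v`. -/
noncomputable def colorDeg (G : SimpleGraph V) (c : Sym2 V → ℕ) (v : V) : ℕ :=
  Set.ncard {α : ℕ | ∃ u, G.Adj u v ∧ c s(u, v) = α}

/-- Number of distinct colors `c({u,v})` over `u ∈ N(v) ∩ U`. -/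
noncomputable def colorDegOn (G : SimpleGraph V) (c : Sym2 V → ℕ) (v : V) (U : Set V) : ℕ :=
  Set.ncard {α : ℕ | ∃ u ∈ U, G.Adj u v ∧ c s(u, v) = α}

/-- Minimum color-degree `δ^c(G)`. -/
noncomputable def minColorDeg (G : SimpleGraph V) (c : Sym2 V → ℕ) : ℕ :=
  ⨅ v : V, colorDeg G c v

/-- `(G,c)` is edge-minimal: no proper spanning subgraph has the same minimum color-degree. -/
def EdgeMinimal (G : SimpleGraph V) (c : Sym2 V → ℕ) : Prop :=
  ∀ H : SimpleGraph V, H ≤ G → H ≠ G → minColorDeg H c ≠ minColorDeg G c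

/-- `(G,c)` contains a rainbow cycle on `ℓ` vertices. -/
def HasRainbowCycle (G : SimpleGraph V) (c : Sym2 V → ℕ) (ℓ : ℕ) : Prop :=
  ∃ (u : V) (p : G.Walk u u), p.IsCycle ∧ p.length = ℓ ∧ (p.edges.map c).Nodup

/-- There is a rainbow path from `v` to `y` on `k` vertices whose edge colors avoid `C`. -/
def RainbowPathAvoiding (G : SimpleGraph V) (c : Sym2 V → ℕ) (v y : V) (k : ℕ)
    (C : Set ℕ) : Prop :=
  ∃ p : G.Walk v y, p.IsPath ∧ p.length + 1 = k ∧ (p.edges.map c).Nodup ∧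
    ∀ e ∈ p.edges, c e ∉ C

/-- `σ_{v,X}(y)`: the number of colors `X`-separating `y` from `v`. -/
noncomputable def sepCount (G : SimpleGraph V) (c : Sym2 V → ℕ) (v : V) (X : Set V)
    (y : V) : ℕ :=
  Set.ncard {α : ℕ | ∃ x ∈ X, G.Adj x y ∧ c s(x, y) = α ∧ c s(v, x) ≠ α}

/-- `ρ_{v,X}(y)`: the number of colors restricted for `y` by `(v,X)`. -/
noncomputable def restrCount (G : SimpleGraph V) (c : Sym2 V → ℕ) (v : V) (X : Set V)
    (y : V) : ℕ :=
  Set.ncard {α : ℕ | (∃ x ∈ X, G.Adj x y ∧ c s(x, y) = α ∧ c s(v, x) ≠ α) ∧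
    ∀ w, G.Adj w y → w ∉ X → c s(w, y) ≠ α}

/-- The replication number `R(G,c) = max_{v,α} |N_α(v)|`. -/
noncomputable def repNum (G : SimpleGraph V) (c : Sym2 V → ℕ) : ℕ :=
  ⨆ v : V, ⨆ α : ℕ, Set.ncard {u : V | G.Adj u v ∧ c s(u, v) = α}

/-- `N_!(v)`: neighbors `u` of `v` whose color `c({u,v})` appears on exactly one edge at `v`. -/
def bangNbhd (G : SimpleGraph V) (c : Sym2 V → ℕ) (v : V) : Set V :=
  {u : V | G.Adj u v ∧ Set.ncard {w : V | G.Adj w v ∧ c s(w, v) = c s(u, v)} = 1}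

/-!
Deleting edges without lowering the minimum color-degree `δ`, one may assume that the color of
every edge appears only once at one of its ends. Let `v` be the center of a largest monochromatic
star, of size `R`, and let `Y` be the set of ends of rainbow paths from `v` on `ℓ - 1` vertices
that avoid the colors repeated at `v`. Such a path does not close up to a rainbow `ℓ`-cycle, so if
`δ > n / 2 + 3 * ℓ`, then at least `R - 1 + s` monochromatic paths `v w y` end at each `y ∈ Y`,
where `s = deg^c(v) - δ + 2 * ℓ - 5`. Minimality puts `w` in `N_!(v)`, and at most `R - 1` of
these paths pass through each `w`. Double counting gives `|Y| * (R - 1 + s) ≤ |N_!(v)| * (R - 1)`.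
Extending a shorter rainbow path shows that `|N_!(v)| ≤ |Y| + s` and `R ≤ |Y|`, a contradiction.
-/

section Counting

variable {α β κ : Type*}

theorem ncard_setOf_mem_list_le_length (l : List α) : {x | x ∈ l}.ncard ≤ l.length := by
  classical
  rw [← List.coe_toFinset, Set.ncard_coe_finset]
  exact l.toFinset_card_le

theorem ncard_mul_le_ncard_mul (r : α → β → Prop) {s : Set α} {t : Set β} (hs : s.Finite)
    (ht : t.Finite) {m n : ℕ} (hm : ∀ a ∈ s, m ≤ {b ∈ t | r a b}.ncard)
    (hn : ∀ b ∈ t, {a ∈ s | r a b}.ncard ≤ n) : s.ncard * m ≤ t.ncard * n := by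
  classical
  lift s to Finset α using hs
  lift t to Finset β using ht
  simp only [Set.ncard_coe_finset, mem_coe] at hm hn ⊢
  refine card_mul_le_card_mul r (fun a ha => ?_) (fun b hb => ?_)
  · simpa only [bipartiteAbove, ← Set.ncard_coe_finset, coe_filter] using hm a ha
  · simpa only [bipartiteBelow, ← Set.ncard_coe_finset, coe_filter] using hn b hb

variable {s : Set α} (f : α → κ)

theorem ncard_image_le_ncard_image_diff_fiber_add_one (hs : s.Finite) (k : κ) :
    (f '' s).ncard ≤ (f '' (s \ {a ∈ s | f a = k})).ncard + 1 := by
  have hsub : f '' s ⊆ insert k (f '' (s \ {a ∈ s | f a = k})) := by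
    rintro _ ⟨a, ha, rfl⟩
    by_cases hk : f a = k
    · exact Or.inl hk
    · exact Or.inr ⟨a, ⟨ha, fun h => hk h.2⟩, rfl⟩
  exact (Set.ncard_le_ncard hsub ((hs.sdiff.image f).insert k)).trans (Set.ncard_insert_le _ _)

theorem ncard_image_add_ncard_fiber_le (hs : s.Finite) (k : κ) :
    (f '' s).ncard + {a ∈ s | f a = k}.ncard ≤ s.ncard + 1 := by
  have himage := ncard_image_le_ncard_image_diff_fiber_add_one f hs k
  have hdiff := Set.ncard_image_le (f := f) (hs.sdiff (t := {a ∈ s | f a = k}))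
  have hsplit := Set.ncard_sdiff_add_ncard_of_subset (Set.sep_subset s (f · = k)) hs
  omega

variable {f}

theorem two_mul_ncard_image_le (hs : s.Finite) (hf : ∀ a ∈ s, ∃ b ∈ s, b ≠ a ∧ f b = f a) :
    2 * (f '' s).ncard ≤ s.ncard := by
  classical
  lift s to Finset α using hs
  rw [← coe_image, Set.ncard_coe_finset, Set.ncard_coe_finset]
  refine mul_card_image_le_card s 2 fun k hk => ?_
  obtain ⟨a, ha, rfl⟩ := mem_image.1 hk
  obtain ⟨b, hb, hne, hab⟩ := hf a ha
  exact one_lt_card.2 ⟨b, mem_filter.2 ⟨hb, hab⟩, a, mem_filter.2 ⟨ha, rfl⟩, hne⟩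

theorem two_mul_ncard_image_add_ncard_fiber_le (hs : s.Finite)
    (hf : ∀ a ∈ s, ∃ b ∈ s, b ≠ a ∧ f b = f a) (k : κ) :
    2 * (f '' s).ncard + {a ∈ s | f a = k}.ncard ≤ s.ncard + 2 := by
  have hrest : 2 * (f '' (s \ {a ∈ s | f a = k})).ncard ≤ (s \ {a ∈ s | f a = k}).ncard := by
    refine two_mul_ncard_image_le hs.sdiff ?_
    rintro a ⟨ha, hak⟩
    obtain ⟨b, hb, hne, hab⟩ := hf a ha
    exact ⟨b, ⟨hb, fun hbk => hak ⟨ha, hab ▸ hbk.2⟩⟩, hne, hab⟩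
  have himage := ncard_image_le_ncard_image_diff_fiber_add_one f hs k
  have hsplit := Set.ncard_sdiff_add_ncard_of_subset (Set.sep_subset s (f · = k)) hs
  omega

end Counting

section ColorNeighborhoods

/-- The star `N_α(v)`: the neighbors of `v` joined to it by an edge of color `α`. -/
def colorNbhd (G : SimpleGraph V) (c : Sym2 V → ℕ) (v : V) (α : ℕ) : Set V :=
  {u | G.Adj u v ∧ c s(u, v) = α}

/-- The colors appearing on at least two edges at `v`; the paths from `v` used to close up
rainbow cycles avoid them. -/
def repeatedColors (G : SimpleGraph V) (c : Sym2 V → ℕ) (v : V) : Set ℕ :=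
  (fun u => c s(u, v)) '' (G.neighborSet v \ bangNbhd G c v)

variable {G : SimpleGraph V} {c : Sym2 V → ℕ} {u v : V}

theorem colorNbhd_eq_sep_neighborSet (α : ℕ) :
    colorNbhd G c v α = {u ∈ G.neighborSet v | c s(u, v) = α} := by
  ext u
  exact and_congr_left' (G.adj_comm u v)

theorem colorDeg_eq_ncard_image (G : SimpleGraph V) (c : Sym2 V → ℕ) (v : V) :
    colorDeg G c v = ((fun u => c s(u, v)) '' G.neighborSet v).ncard := by
  simp only [colorDeg, Set.image, SimpleGraph.mem_neighborSet, G.adj_comm v]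

theorem mem_bangNbhd_iff :
    u ∈ bangNbhd G c v ↔
      G.Adj u v ∧ ∀ w, G.Adj w v → c s(w, v) = c s(u, v) → w = u := by
  refine and_congr_right fun huv => ⟨fun h w hwv hcol => ?_, fun h => ?_⟩
  · obtain ⟨x, hx⟩ := Set.ncard_eq_one.1 h
    have hw : w ∈ ({x} : Set V) := hx ▸ ⟨hwv, hcol⟩
    have hu : u ∈ ({x} : Set V) := hx ▸ ⟨huv, rfl⟩
    exact hw.trans hu.symm
  · exact Set.ncard_eq_one.2 ⟨u, Set.eq_singleton_iff_unique_mem.2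
      ⟨⟨huv, rfl⟩, fun w hw => h w hw.1 hw.2⟩⟩

theorem exists_ne_of_notMem_bangNbhd (huv : G.Adj u v) (hu : u ∉ bangNbhd G c v) :
    ∃ w, w ≠ u ∧ G.Adj w v ∧ c s(w, v) = c s(u, v) := by
  by_contra! h
  exact hu (mem_bangNbhd_iff.2 ⟨huv, fun w hwv hcol =>
    by_contra fun hne => h w hne hwv hcol⟩)

theorem bangNbhd_subset_neighborSet : bangNbhd G c v ⊆ G.neighborSet v :=
  fun _ hu => hu.1.symm

theorem injOn_bangNbhd : Set.InjOn (fun u => c s(u, v)) (bangNbhd G c v) :=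
  fun _ hu _ hw hcol => (mem_bangNbhd_iff.1 hw).2 _ hu.1 hcol

theorem exists_ne_of_mem_neighborSet_diff_bangNbhd
    (hu : u ∈ G.neighborSet v \ bangNbhd G c v) :
    ∃ w ∈ G.neighborSet v \ bangNbhd G c v, w ≠ u ∧ c s(w, v) = c s(u, v) := by
  obtain ⟨w, hne, hwv, hcol⟩ := exists_ne_of_notMem_bangNbhd hu.1.symm hu.2
  exact ⟨w, ⟨hwv.symm, fun hw => hne ((mem_bangNbhd_iff.1 hw).2 u hu.1.symm hcol.symm).symm⟩,
    hne, hcol⟩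

variable [Finite V]

theorem finite_repeatedColors (G : SimpleGraph V) (c : Sym2 V → ℕ) (v : V) :
    (repeatedColors G c v).Finite :=
  (Set.toFinite _).image _

theorem ncard_bangNbhd_add_ncard_repeatedColors (G : SimpleGraph V) (c : Sym2 V → ℕ) (v : V) :
    (bangNbhd G c v).ncard + (repeatedColors G c v).ncard = colorDeg G c v := by
  have hdisj : Disjoint ((fun u => c s(u, v)) '' bangNbhd G c v) (repeatedColors G c v) := by
    rw [Set.disjoint_left]
    rintro _ ⟨u, hu, rfl⟩ ⟨w, ⟨hwv, hw⟩, hcol⟩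
    exact hw ((mem_bangNbhd_iff.1 hu).2 w hwv.symm hcol ▸ hu)
  rw [colorDeg_eq_ncard_image, ← Set.union_sdiff_cancel bangNbhd_subset_neighborSet,
    Set.image_union, ← injOn_bangNbhd.ncard_image]
  exact (Set.ncard_union_eq hdisj (Set.toFinite _) (finite_repeatedColors G c v)).symm

theorem colorDeg_add_ncard_colorNbhd_le (G : SimpleGraph V) (c : Sym2 V → ℕ) (v : V)
    (α : ℕ) :
    colorDeg G c v + (colorNbhd G c v α).ncard ≤ (G.neighborSet v).ncard + 1 := by
  rw [colorDeg_eq_ncard_image, colorNbhd_eq_sep_neighborSet]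
  exact ncard_image_add_ncard_fiber_le _ (Set.toFinite _) α

theorem two_mul_colorDeg_add_ncard_colorNbhd_le (G : SimpleGraph V) (c : Sym2 V → ℕ) (v : V)
    (α : ℕ) :
    2 * colorDeg G c v + (colorNbhd G c v α).ncard ≤
      (G.neighborSet v).ncard + (bangNbhd G c v).ncard + 2 := by
  have hsplit := Set.ncard_sdiff_add_ncard_of_subset
    (bangNbhd_subset_neighborSet (G := G) (c := c) (v := v))
  rw [← ncard_bangNbhd_add_ncard_repeatedColors, repeatedColors]
  rcases le_or_gt (colorNbhd G c v α).ncard 1 with hsmall | hlarge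
  · have := two_mul_ncard_image_le (Set.toFinite (G.neighborSet v \ bangNbhd G c v))
      fun _ => exists_ne_of_mem_neighborSet_diff_bangNbhd
    omega
  · have hstar : colorNbhd G c v α =
        {u ∈ G.neighborSet v \ bangNbhd G c v | c s(u, v) = α} := by
      ext u
      refine ⟨fun ⟨huv, hu⟩ => ⟨⟨huv.symm, fun hbang => ?_⟩, hu⟩, fun ⟨⟨huv, _⟩, hu⟩ =>
        ⟨huv.symm, hu⟩⟩
      exact hlarge.ne' (hu ▸ hbang.2)
    have := two_mul_ncard_image_add_ncard_fiber_le
      (Set.toFinite (G.neighborSet v \ bangNbhd G c v))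
      (fun _ => exists_ne_of_mem_neighborSet_diff_bangNbhd) α
    rw [← hstar] at this
    omega

theorem ncard_colorNbhd_le_repNum (v : V) (α : ℕ) :
    (colorNbhd G c v α).ncard ≤ repNum G c := by
  have hbound (v : V) (α : ℕ) : (colorNbhd G c v α).ncard ≤ Nat.card V := Set.ncard_le_card _
  calc (colorNbhd G c v α).ncard ≤ ⨆ α, (colorNbhd G c v α).ncard :=
        le_ciSup (f := fun α => (colorNbhd G c v α).ncard)
          ⟨Nat.card V, Set.forall_mem_range.2 (hbound v)⟩ α
    _ ≤ repNum G c :=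
        le_ciSup (f := fun v => ⨆ α, (colorNbhd G c v α).ncard)
          ⟨Nat.card V, Set.forall_mem_range.2 fun v => ciSup_le (hbound v)⟩ v

theorem exists_ncard_colorNbhd_eq_repNum [Nonempty V] (G : SimpleGraph V) (c : Sym2 V → ℕ) :
    ∃ v α, (colorNbhd G c v α).ncard = repNum G c := by
  have hbound (v : V) (α : ℕ) : (colorNbhd G c v α).ncard ≤ Nat.card V := Set.ncard_le_card _
  obtain ⟨v, hv⟩ := exists_eq_ciSup_of_finite (f := fun v => ⨆ α, (colorNbhd G c v α).ncard)
  obtain ⟨α, hα⟩ := Nat.sSup_mem (Set.range_nonempty fun α => (colorNbhd G c v α).ncard)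
    ⟨Nat.card V, Set.forall_mem_range.2 (hbound v)⟩
  exact ⟨v, α, hα.trans hv⟩

end ColorNeighborhoods

section MinColorDeg

variable {G : SimpleGraph V} {c : Sym2 V → ℕ} {u v : V}

theorem minColorDeg_le (G : SimpleGraph V) (c : Sym2 V → ℕ) (v : V) :
    minColorDeg G c ≤ colorDeg G c v :=
  ciInf_le (OrderBot.bddBelow _) v

theorem exists_colorDeg_eq_minColorDeg [Nonempty V] (G : SimpleGraph V) (c : Sym2 V → ℕ) :
    ∃ v, colorDeg G c v = minColorDeg G c :=
  ciInf_mem fun v => colorDeg G c v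

theorem colorDeg_deleteEdge_of_notMem_bangNbhd (huv : G.Adj u v) (hu : u ∉ bangNbhd G c v)
    (hv : v ∉ bangNbhd G c u) (z : V) :
    colorDeg (G.deleteEdges {s(u, v)}) c z = colorDeg G c z := by
  have hrepeat {x : V} (hx : s(x, z) = s(u, v)) :
      ∃ w, G.Adj w z ∧ s(w, z) ≠ s(u, v) ∧ c s(w, z) = c s(u, v) := by
    rcases Sym2.eq_iff.1 hx with ⟨rfl, rfl⟩ | ⟨rfl, rfl⟩
    · obtain ⟨w, hne, hwz, hcol⟩ := exists_ne_of_notMem_bangNbhd huv hu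
      exact ⟨w, hwz, fun h => hne (Sym2.congr_left.1 h), hcol⟩
    · obtain ⟨w, hne, hwz, hcol⟩ := exists_ne_of_notMem_bangNbhd huv.symm hv
      rw [← hx]
      exact ⟨w, hwz, fun h => hne (Sym2.congr_left.1 h), hcol⟩
  simp only [colorDeg]
  congr 1
  ext α
  refine ⟨fun ⟨x, hx, hcol⟩ => ⟨x, hx.1, hcol⟩, fun ⟨x, hxz, hcol⟩ => ?_⟩
  by_cases hx : s(x, z) = s(u, v)
  · obtain ⟨w, hwz, hne, hw⟩ := hrepeat hx
    exact ⟨w, SimpleGraph.deleteEdges_adj.2 ⟨hwz, hne⟩, hw.trans (hx ▸ hcol)⟩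
  · exact ⟨x, SimpleGraph.deleteEdges_adj.2 ⟨hxz, hx⟩, hcol⟩

theorem EdgeMinimal.mem_bangNbhd_or (hmin : EdgeMinimal G c) (huv : G.Adj u v) :
    u ∈ bangNbhd G c v ∨ v ∈ bangNbhd G c u := by
  by_contra! h
  refine hmin (G.deleteEdges {s(u, v)}) (SimpleGraph.deleteEdges_le _) (fun heq => ?_) ?_
  · exact (SimpleGraph.deleteEdges_adj.1 (heq ▸ huv)).2 rfl
  · exact iInf_congr (colorDeg_deleteEdge_of_notMem_bangNbhd huv h.1 h.2)

theorem exists_edgeMinimal_le [Finite V] (G : SimpleGraph V) (c : Sym2 V → ℕ) :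
    ∃ H ≤ G, EdgeMinimal H c ∧ minColorDeg H c = minColorDeg G c := by
  obtain ⟨H, hH⟩ := (Set.toFinite {H | H ≤ G ∧ minColorDeg H c = minColorDeg G c}).exists_minimal
    ⟨G, le_rfl, rfl⟩
  refine ⟨H, hH.prop.1, fun K hK hne hdeg => hne ?_, hH.prop.2⟩
  exact hK.antisymm (hH.le_of_le ⟨hK.trans hH.prop.1, hdeg.trans hH.prop.2⟩ hK)

end MinColorDeg

section RainbowPaths

theorem nodup_map_edges_concat_iff {κ : Type*} {G : SimpleGraph V} {c : Sym2 V → κ} {u v w : V}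
    {p : G.Walk u v} (h : G.Adj v w) :
    ((p.concat h).edges.map c).Nodup ↔
      (p.edges.map c).Nodup ∧ c s(v, w) ∉ p.edges.map c := by
  rw [SimpleGraph.Walk.edges_concat, List.concat_eq_append, List.map_append, List.map_singleton,
    ← List.concat_eq_append, List.nodup_concat, and_comm]

variable {G : SimpleGraph V} {c : Sym2 V → ℕ} {C : Set ℕ} {v w y : V} {k : ℕ}

theorem rainbowPathAvoiding_concat {p : G.Walk v y} (hp : p.IsPath)
    (hrainbow : (p.edges.map c).Nodup) (havoid : ∀ e ∈ p.edges, c e ∉ C) (hyw : G.Adj y w)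
    (hw : w ∉ p.support) (hnew : c s(y, w) ∉ p.edges.map c) (hC : c s(y, w) ∉ C) :
    RainbowPathAvoiding G c v w (p.length + 2) C := by
  refine ⟨p.concat hyw, hp.concat hw hyw, by rw [SimpleGraph.Walk.length_concat],
    (nodup_map_edges_concat_iff hyw).2 ⟨hrainbow, hnew⟩, fun e he => ?_⟩
  rw [SimpleGraph.Walk.edges_concat, List.concat_eq_append, List.mem_append,
    List.mem_singleton] at he
  rcases he with he | rfl
  exacts [havoid e he, hC]

theorem hasRainbowCycle_of_isPath {p : G.Walk v y} (hp : p.IsPath)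
    (hrainbow : (p.edges.map c).Nodup) (hw : w ∉ p.support) (hwv : G.Adj w v) (hyw : G.Adj y w)
    (hy : c s(y, w) ∉ p.edges.map c) (hv : c s(w, v) ∉ p.edges.map c)
    (hne : c s(y, w) ≠ c s(w, v)) : HasRainbowCycle G c (p.length + 2) := by
  have hnodup : ((SimpleGraph.Walk.cons hwv (p.concat hyw)).edges.map c).Nodup := by
    rw [SimpleGraph.Walk.edges_cons, List.map_cons, List.nodup_cons]
    refine ⟨?_, (nodup_map_edges_concat_iff hyw).2 ⟨hrainbow, hy⟩⟩
    rw [SimpleGraph.Walk.edges_concat, List.concat_eq_append, List.map_append, List.mem_append,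
      List.map_singleton, List.mem_singleton, not_or]
    exact ⟨hv, hne.symm⟩
  refine ⟨w, .cons hwv (p.concat hyw), ?_, by simp, hnodup⟩
  rw [SimpleGraph.Walk.edges_cons] at hnodup
  exact (SimpleGraph.Walk.cons_isCycle_iff _ _).2
    ⟨hp.concat hw hyw, (List.nodup_cons.1 hnodup.of_map).1⟩

theorem RainbowPathAvoiding.ne (h : RainbowPathAvoiding G c v y k C) (hk : k ≠ 1) : y ≠ v := by
  rintro rfl
  obtain ⟨p, hp, rfl, -⟩ := h
  exact hk (by rw [(SimpleGraph.Walk.isPath_iff_nil.1 hp).length_eq_zero])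

theorem HasRainbowCycle.map {W : Type*} {H : SimpleGraph W} {c : Sym2 W → ℕ} (f : G →g H)
    (hf : Function.Injective f) (h : HasRainbowCycle G (c ∘ Sym2.map f) k) :
    HasRainbowCycle H c k := by
  obtain ⟨u, p, hp, hlen, hrainbow⟩ := h
  refine ⟨f u, p.map f, hp.map hf, by rw [SimpleGraph.Walk.length_map, hlen], ?_⟩
  rwa [SimpleGraph.Walk.edges_map, List.map_map]

theorem colorDeg_lt_of_rainbowPathAvoiding [Finite V] (hC : C.Finite)
    (h : RainbowPathAvoiding G c v y k C) :
    colorDeg G c y < {w | RainbowPathAvoiding G c v w (k + 1) C}.ncard + C.ncard + 2 * k := by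
  obtain ⟨p, hp, rfl, hrainbow, havoid⟩ := h
  set Y := {w | RainbowPathAvoiding G c v w (p.length + 1 + 1) C}
  have hsub : (fun u => c s(u, y)) '' G.neighborSet y ⊆
      (fun u => c s(u, y)) '' (Y ∪ {u | u ∈ p.support}) ∪ (C ∪ {α | α ∈ p.edges.map c}) := by
    rintro _ ⟨w, hyw, rfl⟩
    by_contra hw
    simp only [Set.mem_union, not_or] at hw
    obtain ⟨hYsupp, hwC, hwp⟩ := hw
    have hsupp : w ∉ p.support := fun h => hYsupp (Set.mem_image_of_mem _ (Or.inr h))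
    refine hYsupp (Set.mem_image_of_mem _ (Or.inl ?_))
    rw [Sym2.eq_swap] at hwC hwp
    exact rainbowPathAvoiding_concat hp hrainbow havoid hyw hsupp hwp hwC
  have hcover := Set.ncard_le_ncard hsub
    (((Set.toFinite _).image _).union (hC.union (List.finite_toSet _)))
  have hunion := Set.ncard_union_le
    ((fun u => c s(u, y)) '' (Y ∪ {u | u ∈ p.support})) (C ∪ {α | α ∈ p.edges.map c})
  have hcolors := Set.ncard_union_le C {α | α ∈ p.edges.map c}
  have himage := Set.ncard_image_le (f := fun u => c s(u, y))
    (Set.toFinite (Y ∪ {u | u ∈ p.support}))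
  have hverts := Set.ncard_union_le Y {u | u ∈ p.support}
  have hedges := ncard_setOf_mem_list_le_length (p.edges.map c)
  have hsupport := ncard_setOf_mem_list_le_length p.support
  rw [List.length_map, SimpleGraph.Walk.length_edges] at hedges
  rw [SimpleGraph.Walk.length_support] at hsupport
  rw [colorDeg_eq_ncard_image]
  omega

theorem exists_rainbowPathAvoiding [Finite V] (G : SimpleGraph V) (c : Sym2 V → ℕ)
    (hC : C.Finite) (v : V) (hk : C.ncard + 2 * k ≤ minColorDeg G c) :
    ∃ y, RainbowPathAvoiding G c v y (k + 1) C := by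
  induction k with
  | zero => exact ⟨v, .nil, .nil, rfl, List.nodup_nil, by simp⟩
  | succ k ih =>
    obtain ⟨y, hy⟩ := ih (by omega)
    have hlt := colorDeg_lt_of_rainbowPathAvoiding hC hy
    have hdeg := minColorDeg_le G c y
    exact Set.nonempty_of_ncard_ne_zero
      (s := {w | RainbowPathAvoiding G c v w (k + 1 + 1) C}) (by omega)

theorem minColorDeg_lt_ncard_rainbowPathAvoiding [Finite V] (G : SimpleGraph V) (c : Sym2 V → ℕ)
    (hC : C.Finite) (v : V) (hk : C.ncard + 2 * k ≤ minColorDeg G c) :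
    minColorDeg G c <
      {y | RainbowPathAvoiding G c v y (k + 2) C}.ncard + C.ncard + 2 * (k + 1) := by
  obtain ⟨z, hz⟩ := exists_rainbowPathAvoiding G c hC v hk
  exact (minColorDeg_le G c z).trans_lt (colorDeg_lt_of_rainbowPathAvoiding hC hz)

end RainbowPaths

section MonochromaticPaths

/-- The midpoints `w` of the monochromatic two-edge paths `v w y`. -/
def monoMidpoints (G : SimpleGraph V) (c : Sym2 V → ℕ) (v y : V) : Set V :=
  {w | G.Adj v w ∧ G.Adj y w ∧ c s(y, w) = c s(v, w)}

variable {G : SimpleGraph V} {c : Sym2 V → ℕ} {C : Set ℕ} {v w y : V} {k : ℕ}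

theorem EdgeMinimal.monoMidpoints_subset_bangNbhd (hmin : EdgeMinimal G c) (hne : y ≠ v) :
    monoMidpoints G c v y ⊆ bangNbhd G c v := by
  rintro w ⟨hvw, hyw, hcol⟩
  refine (hmin.mem_bangNbhd_or hvw).resolve_left fun hv => hne ?_
  exact (mem_bangNbhd_iff.1 hv).2 y hyw hcol

theorem ncard_setOf_color_mem_le_length (hC : repeatedColors G c v ⊆ C) {l : List (Sym2 V)}
    (hl : ∀ e ∈ l, c e ∉ C) :
    {x ∈ G.neighborSet v | c s(x, v) ∈ l.map c}.ncard ≤ l.length := by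
  have hbang : {x ∈ G.neighborSet v | c s(x, v) ∈ l.map c} ⊆ bangNbhd G c v := by
    rintro x ⟨hvx, hx⟩
    obtain ⟨e, he, hex⟩ := List.mem_map.1 hx
    by_contra hnot
    exact hl e he (hC ⟨x, ⟨hvx, hnot⟩, hex.symm⟩)
  calc _ ≤ {α | α ∈ l.map c}.ncard :=
        Set.ncard_le_ncard_of_injOn _ (fun x hx => hx.2) (injOn_bangNbhd.mono hbang)
          (List.finite_toSet _)
    _ ≤ l.length := (ncard_setOf_mem_list_le_length _).trans_eq (List.length_map _)

variable [Finite V]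

theorem ncard_setOf_mem_monoMidpoints_lt_repNum (hvw : G.Adj v w) :
    {y | y ≠ v ∧ w ∈ monoMidpoints G c v y}.ncard < repNum G c := by
  refine (Set.ncard_lt_ncard ?_).trans_le (ncard_colorNbhd_le_repNum w (c s(v, w)))
  exact (Set.ssubset_iff_of_subset fun y hy => hy.2.2).2 ⟨v, ⟨hvw, rfl⟩, fun h => h.1 rfl⟩

theorem colorDeg_add_ncard_neighborSet_le (G : SimpleGraph V) (c : Sym2 V → ℕ) (v y : V) :
    colorDeg G c y + (G.neighborSet v).ncard ≤
      Nat.card V + sepCount G c v (G.neighborSet v) y + (monoMidpoints G c v y).ncard := by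
  set N := G.neighborSet v
  set T := {α | ∃ x ∈ N, G.Adj x y ∧ c s(x, y) = α ∧ c s(v, x) ≠ α}
  have hsub : (fun u => c s(u, y)) '' G.neighborSet y ⊆
      T ∪ (fun u => c s(u, y)) '' (Nᶜ ∪ monoMidpoints G c v y) := by
    rintro _ ⟨w, hyw, rfl⟩
    by_cases hvw : w ∈ N
    · by_cases hcol : c s(v, w) = c s(w, y)
      · exact Or.inr ⟨w, Or.inr ⟨hvw, hyw, by rw [hcol, Sym2.eq_swap]⟩, rfl⟩
      · exact Or.inl ⟨w, hvw, hyw.symm, rfl, hcol⟩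
    · exact Or.inr ⟨w, Or.inl hvw, rfl⟩
  have hT : T.Finite := ((Set.toFinite N).image fun x => c s(x, y)).subset
    fun α ⟨x, hx, _, hα, _⟩ => ⟨x, hx, hα⟩
  have hcover := Set.ncard_le_ncard hsub (hT.union ((Set.toFinite _).image _))
  have hunion := Set.ncard_union_le T
    ((fun u => c s(u, y)) '' (Nᶜ ∪ monoMidpoints G c v y))
  have himage := Set.ncard_image_le (f := fun u => c s(u, y))
    (Set.toFinite (Nᶜ ∪ monoMidpoints G c v y))
  have hverts := Set.ncard_union_le Nᶜ (monoMidpoints G c v y)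
  have hcompl := Set.ncard_add_ncard_compl N
  have hsep : T.ncard = sepCount G c v N y := rfl
  rw [colorDeg_eq_ncard_image]
  omega

/-- A color separating `y` from `v` through a neighbor `x` of `v` would close the rainbow path from
`v` to `y` to a rainbow cycle through `x`, unless it is on the path, `x` is on the path, or the
color of `vx` is on the path. -/
theorem sepCount_add_two_le (hpath : RainbowPathAvoiding G c v y k C)
    (hC : repeatedColors G c v ⊆ C) (hno : ¬HasRainbowCycle G c (k + 1)) :
    sepCount G c v (G.neighborSet v) y + 2 ≤ 3 * k := by
  obtain ⟨p, hp, rfl, hrainbow, havoid⟩ := hpath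
  set F := {x ∈ G.neighborSet v | c s(x, v) ∈ p.edges.map c}
  have hsub : {α | ∃ x ∈ G.neighborSet v, G.Adj x y ∧ c s(x, y) = α ∧ c s(v, x) ≠ α} ⊆
      {α | α ∈ p.edges.map c} ∪ (fun x => c s(x, y)) '' ({x | x ∈ p.support} ∪ F) := by
    rintro _ ⟨x, hvx, hxy, rfl, hne⟩
    by_contra hx
    simp only [Set.mem_union, not_or] at hx
    obtain ⟨hcolor, hvert⟩ := hx
    have hsupp : x ∉ p.support := fun h => hvert (Set.mem_image_of_mem _ (Or.inl h))
    have hF : c s(x, v) ∉ p.edges.map c :=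
      fun h => hvert (Set.mem_image_of_mem _ (Or.inr ⟨hvx, h⟩))
    rw [Sym2.eq_swap] at hcolor
    refine hno (hasRainbowCycle_of_isPath hp hrainbow hsupp hvx.symm hxy.symm hcolor hF ?_)
    rw [Sym2.eq_swap (a := y), Sym2.eq_swap (a := x) (b := v)]
    exact hne.symm
  have hcover := Set.ncard_le_ncard hsub ((List.finite_toSet _).union ((Set.toFinite _).image _))
  have hunion := Set.ncard_union_le {α | α ∈ p.edges.map c}
    ((fun x => c s(x, y)) '' ({x | x ∈ p.support} ∪ F))
  have himage := Set.ncard_image_le (f := fun x => c s(x, y))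
    (Set.toFinite ({x | x ∈ p.support} ∪ F))
  have hverts := Set.ncard_union_le {x | x ∈ p.support} F
  have hedges := ncard_setOf_mem_list_le_length (p.edges.map c)
  have hsupport := ncard_setOf_mem_list_le_length p.support
  have hF : F.ncard ≤ p.edges.length := ncard_setOf_color_mem_le_length hC havoid
  rw [List.length_map] at hedges
  rw [SimpleGraph.Walk.length_edges] at hedges hF
  rw [SimpleGraph.Walk.length_support] at hsupport
  rw [sepCount]
  omega

end MonochromaticPaths

section MainBound

variable {G : SimpleGraph V} {c : Sym2 V → ℕ} [Finite V]

theorem EdgeMinimal.ncard_mul_le_ncard_bangNbhd_mul (hmin : EdgeMinimal G c) (v : V) {k m : ℕ}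
    (hk : k ≠ 1) (hno : ¬HasRainbowCycle G c (k + 1))
    (hm : m + Nat.card V + 3 * k ≤ minColorDeg G c + (G.neighborSet v).ncard + 2) :
    {y | RainbowPathAvoiding G c v y k (repeatedColors G c v)}.ncard * m ≤
      (bangNbhd G c v).ncard * (repNum G c - 1) := by
  refine ncard_mul_le_ncard_mul (fun y w => w ∈ monoMidpoints G c v y) (Set.toFinite _)
    (Set.toFinite _) (fun y hy => ?_) (fun w hw => ?_)
  · have hsub := hmin.monoMidpoints_subset_bangNbhd (hy.ne hk)
    rw [← Set.inter_def, Set.inter_eq_right.2 hsub]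
    have hsep := sepCount_add_two_le hy subset_rfl hno
    have hcount := colorDeg_add_ncard_neighborSet_le G c v y
    have hdeg := minColorDeg_le G c y
    omega
  · refine Nat.le_sub_one_of_lt (lt_of_le_of_lt ?_
      (ncard_setOf_mem_monoMidpoints_lt_repNum (c := c) hw.1.symm))
    exact Set.ncard_le_ncard fun y hy => ⟨hy.1.ne hk, hy.2⟩

theorem EdgeMinimal.two_mul_minColorDeg_le (hmin : EdgeMinimal G c) {ℓ : ℕ} (hl : 3 ≤ ℓ)
    (hno : ¬HasRainbowCycle G c ℓ) : 2 * minColorDeg G c ≤ Nat.card V + 6 * ℓ := by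
  rcases isEmpty_or_nonempty V with hV | hV
  · simp [minColorDeg]
  by_contra! hlarge
  obtain ⟨k, rfl⟩ := Nat.exists_eq_add_of_le' hl
  obtain ⟨v, α, hα⟩ := exists_ncard_colorNbhd_eq_repNum G c
  set Y := {y | RainbowPathAvoiding G c v y (k + 2) (repeatedColors G c v)}
  have hdeg := minColorDeg_le G c v
  have hcolors := ncard_bangNbhd_add_ncard_repeatedColors G c v
  have hstar := colorDeg_add_ncard_colorNbhd_le G c v α
  have htwo := two_mul_colorDeg_add_ncard_colorNbhd_le G c v α
  have hN : (G.neighborSet v).ncard ≤ Nat.card V := Set.ncard_le_card _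
  rw [hα] at hstar htwo
  have hY : minColorDeg G c < Y.ncard + (repeatedColors G c v).ncard + 2 * (k + 1) :=
    minColorDeg_lt_ncard_rainbowPathAvoiding G c (finite_repeatedColors G c v) v (by omega)
  obtain ⟨s, hs⟩ : ∃ s, colorDeg G c v + 2 * k + 1 = minColorDeg G c + s :=
    ⟨_, (Nat.add_sub_of_le (by omega)).symm⟩
  have hcount : Y.ncard * (repNum G c - 1 + s) ≤ (bangNbhd G c v).ncard * (repNum G c - 1) :=
    hmin.ncard_mul_le_ncard_bangNbhd_mul v (by omega) hno (by omega)
  have hBY : (bangNbhd G c v).ncard ≤ Y.ncard + s := by omega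
  have hRY : repNum G c - 1 < Y.ncard := by omega
  have hspos : 0 < s := by omega
  refine lt_irrefl ((bangNbhd G c v).ncard * (repNum G c - 1)) ?_
  calc (bangNbhd G c v).ncard * (repNum G c - 1)
      ≤ (Y.ncard + s) * (repNum G c - 1) := Nat.mul_le_mul_right _ hBY
    _ = Y.ncard * (repNum G c - 1) + s * (repNum G c - 1) := Nat.add_mul _ _ _
    _ < Y.ncard * (repNum G c - 1) + s * Y.ncard := by gcongr
    _ = Y.ncard * (repNum G c - 1 + s) := by ring
    _ ≤ (bangNbhd G c v).ncard * (repNum G c - 1) := hcount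

theorem two_mul_minColorDeg_le_of_not_hasRainbowCycle {ℓ : ℕ} (hl : 3 ≤ ℓ)
    (hno : ¬HasRainbowCycle G c ℓ) : 2 * minColorDeg G c ≤ Nat.card V + 6 * ℓ := by
  obtain ⟨H, hHG, hmin, hdeg⟩ := exists_edgeMinimal_le G c
  rw [← hdeg]
  refine hmin.two_mul_minColorDeg_le hl fun hH => hno ?_
  refine HasRainbowCycle.map (.ofLE hHG) Function.injective_id ?_
  simpa using hH

end MainBound

theorem colorDeg_induce (G : SimpleGraph V) (c : Sym2 V → ℕ) (A : Set V) (a : A) :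
    colorDeg (G.induce A) (c ∘ Sym2.map (↑)) a = colorDegOn G c a A := by
  simp [colorDeg, colorDegOn, and_left_comm]

theorem stmt15_general (ℓ : ℕ) (hl : 3 ≤ ℓ) (G : SimpleGraph V) (c : Sym2 V → ℕ)
    (hno : ¬ HasRainbowCycle G c ℓ) (A : Finset V) (hA : A.Nonempty) :
    ∃ a ∈ A, (colorDegOn G c a ↑A : ℚ) ≤ (A.card : ℚ) / 2 + 3 * ℓ := by
  have : Nonempty (A : Set V) := hA.to_subtype
  set c' : Sym2 (A : Set V) → ℕ := c ∘ Sym2.map (↑)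
  have hnoA : ¬HasRainbowCycle (G.induce (A : Set V)) c' ℓ := fun h =>
    hno (HasRainbowCycle.map (SimpleGraph.Embedding.induce _).toHom Subtype.val_injective h)
  have hbound := two_mul_minColorDeg_le_of_not_hasRainbowCycle hl hnoA
  obtain ⟨a, ha⟩ := exists_colorDeg_eq_minColorDeg (G.induce (A : Set V)) c'
  have hdeg : 2 * colorDegOn G c a A ≤ #A + 6 * ℓ := by
    rw [← colorDeg_induce, ha]
    simpa using hbound
  refine ⟨a, a.2, ?_⟩
  have : (2 * colorDegOn G c a A : ℚ) ≤ #A + 6 * ℓ := by exact_mod_cast hdeg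
  linarith

theorem stmt15 (ℓ : ℕ) (hl : 3 ≤ ℓ) [Fintype V] (G : SimpleGraph V) (c : Sym2 V → ℕ)
    (hno : ¬ HasRainbowCycle G c ℓ) (A : Finset V) (hA : A.Nonempty) :
    ∃ a ∈ A, (colorDegOn G c a ↑A : ℚ) ≤ (A.card : ℚ) / 2 + 3 * ℓ :=
  stmt15_general ℓ hl G c hno A hA
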